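/- The map Spin(4) → Spin(3) × Spin(3) sending u + 𝕀v ↦ (u+v, u−v) is a group isomorphism, where every element of Spin(4) ⊂ Cl(4)⁰ is written uniquely as u + 𝕀v with u, v in the quaternion subalgebra spanned by 1, e₁e₂, e₂e₃, e₃e₁ and 𝕀 = e₁e₂e₃e₄; consequently Spin(4) ≅ Spin(3) × Spin(3). -/

import Mathlib

open scoped Quaternion

/-- The negative definite standard quadratic form `-q₄` on `ℝ⁴`. -/
noncomputable def Qneg4 : QuadraticForm ℝ (Fin 4 → ℝ) :=
  QuadraticMap.weightedSumSquares ℝ (fun _ : Fin 4 => (-1 : ℝ))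

/-- The image of the `i`-th standard basis vector of `ℝ⁴` in `Cl(4)`. -/
noncomputable def e (i : Fin 4) : CliffordAlgebra Qneg4 :=
  CliffordAlgebra.ι Qneg4 (Pi.single i 1)

/-- The embedding of the quaternions into `Cl(4)⁰`, sending `1, i, j, k` to
`1, e₁e₂, e₂e₃, e₃e₁`. -/
noncomputable def qmap (x : ℍ[ℝ]) : CliffordAlgebra Qneg4 :=
  algebraMap ℝ _ x.re + x.imI • (e 0 * e 1) + x.imJ • (e 1 * e 2) + x.imK • (e 2 * e 0)

/-- `𝕀 = e₁e₂e₃e₄ ∈ Cl(4)⁰`. -/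
noncomputable def I4 : CliffordAlgebra Qneg4 := e 0 * e 1 * e 2 * e 3

/-! With `ε = (1 + 𝕀) / 2`, a central idempotent of `Cl(4)⁰`, the inverse of
`u + 𝕀v ↦ (u + v, u - v)` is `(a, b) ↦ εa + (1 - ε)b`, an algebra homomorphism on `ℍ × ℍ`. It is
injective because `ε ≠ 0, 1`, that is `𝕀 ≠ ±1`, as `𝕀` anticommutes with `e₁`. Identify `ℝ⁴` with
`ℍ` by `e₁, e₂, e₃, e₄ ↦ j, k, i, 1`, and let `w` be the vector of the quaternion `q`; then
`(q, star q)` is sent to `-w e₄`. Hence the image contains `Cl(4)⁰`, and `(q, star q)` lands in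
`Spin(4)` for unit `q`. These pairs generate all pairs of unit quaternions: if `m, n` are imaginary
units, `(m, -m)(n, -n) = (mn, mn)`, and every unit quaternion is such a product `mn`; multiplying
`(q, q)` by `(q, star q)` gives `(q², 1)`, and every imaginary unit is a square. -/

section Idempotent

theorem isIdempotentElem_half_smul_one_add {K A : Type*} [Field K] [NeZero (2 : K)]
    [Semiring A] [Algebra K A] {ω : A} (hω : ω * ω = 1) :
    IsIdempotentElem ((2⁻¹ : K) • (1 + ω)) := by
  have hsq : (1 + ω) * (1 + ω) = (2 : K) • (1 + ω) := by
    rw [two_smul, add_mul, mul_add ω, hω, one_mul, mul_one, add_comm ω]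
  rw [IsIdempotentElem, smul_mul_smul_comm, hsq, smul_smul, mul_assoc,
    inv_mul_cancel₀ two_ne_zero, mul_one]

theorem eq_zero_of_mul_map_eq_zero {F G A : Type*} [GroupWithZero G] [MonoidWithZero A]
    [FunLike F G A] [MonoidHomClass F G A] {p : A} (hp : p ≠ 0) (f : F) {g : G}
    (h : p * f g = 0) : g = 0 := by
  by_contra hg
  apply hp
  rw [← mul_one p, ← map_one f, ← mul_inv_cancel₀ hg, map_mul, ← mul_assoc, h, zero_mul]

variable {R A B C : Type*} [CommSemiring R] [Ring A] [Algebra R A]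

/-- The homomorphism `(b, c) ↦ p f(b) + (1 - p) g(c)` glued from two algebra homomorphisms along an
idempotent `p` commuting with their values. -/
def idempotentCoprod [Semiring B] [Semiring C] [Algebra R B] [Algebra R C] (p : A)
    (hp : IsIdempotentElem p) (f : B →ₐ[R] A) (g : C →ₐ[R] A) (hf : ∀ b, Commute p (f b))
    (hg : ∀ c, Commute p (g c)) : B × C →ₐ[R] A :=
  AlgHom.ofLinearMap
    ((LinearMap.mulLeft R p ∘ₗ f.toLinearMap).coprod
      (LinearMap.mulLeft R (1 - p) ∘ₗ g.toLinearMap))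
    (by simp)
    (by
      rintro ⟨b, c⟩ ⟨b', c'⟩
      have hpp : p * f b * (p * f b') = p * f (b * b') := by
        rw [(hf b).symm.mul_mul_mul_comm, hp.eq, map_mul]
      have hpq : p * f b * ((1 - p) * g c') = 0 := by
        rw [((Commute.one_right _).sub_right (hf b).symm).mul_mul_mul_comm, hp.mul_one_sub_self,
          zero_mul]
      have hqp : (1 - p) * g c * (p * f b') = 0 := by
        rw [(hg c).symm.mul_mul_mul_comm, hp.one_sub_mul_self, zero_mul]
      have hqq : (1 - p) * g c * ((1 - p) * g c') = (1 - p) * g (c * c') := by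
        rw [((Commute.one_right _).sub_right (hg c).symm).mul_mul_mul_comm, hp.one_sub.eq, map_mul]
      simp [add_mul, mul_add, hpp, hpq, hqp, hqq])

theorem idempotentCoprod_apply [Semiring B] [Semiring C] [Algebra R B] [Algebra R C] {p : A}
    (hp : IsIdempotentElem p) {f : B →ₐ[R] A} {g : C →ₐ[R] A} (hf : ∀ b, Commute p (f b))
    (hg : ∀ c, Commute p (g c)) (x : B × C) :
    idempotentCoprod p hp f g hf hg x = p * f x.1 + (1 - p) * g x.2 := rfl

theorem idempotentCoprod_injective [DivisionRing B] [DivisionRing C] [Algebra R B] [Algebra R C]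
    {p : A} (hp : IsIdempotentElem p) (hp₀ : p ≠ 0) (hp₁ : p ≠ 1) {f : B →ₐ[R] A} {g : C →ₐ[R] A}
    (hf : ∀ b, Commute p (f b)) (hg : ∀ c, Commute p (g c)) :
    Function.Injective (idempotentCoprod p hp f g hf hg) := by
  rw [injective_iff_map_eq_zero]
  rintro ⟨b, c⟩ h
  rw [idempotentCoprod_apply] at h
  have hb : p * f b = 0 := by
    simpa [mul_add, ← mul_assoc, hp.eq, hp.mul_one_sub_self] using congrArg (p * ·) h
  have hc : (1 - p) * g c = 0 := by simpa [hb] using h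
  rw [eq_zero_of_mul_map_eq_zero hp₀ f hb,
    eq_zero_of_mul_map_eq_zero (sub_ne_zero.2 hp₁.symm) g hc, Prod.mk_zero_zero]

end Idempotent

section SpinGroup

open CliffordAlgebra (ι)

variable {R M : Type*} [CommRing R] [AddCommGroup M] [Module R M] {Q : QuadraticForm R M}

theorem ι_mem_pinGroup {m : M} (hm : Q m = -1) : ι Q m ∈ pinGroup Q := by
  have hsq : ι Q m * ι Q m = -1 := by
    rw [CliffordAlgebra.ι_sq_scalar, hm, map_neg, map_one]
  let x : (CliffordAlgebra Q)ˣ :=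
    ⟨ι Q m, -ι Q m, by rw [mul_neg, hsq, neg_neg], by rw [neg_mul, hsq, neg_neg]⟩
  refine pinGroup.mem_iff.2 ⟨⟨x, Subgroup.subset_closure ⟨m, rfl⟩, rfl⟩, ?_⟩
  rw [Unitary.mem_iff, CliffordAlgebra.star_ι, neg_mul, mul_neg, hsq, neg_neg]
  exact ⟨rfl, rfl⟩

theorem ι_mul_ι_mem_spinGroup {m n : M} (hm : Q m = -1) (hn : Q n = -1) :
    ι Q m * ι Q n ∈ spinGroup Q :=
  spinGroup.mem_iff.2 ⟨mul_mem (ι_mem_pinGroup hm) (ι_mem_pinGroup hn),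
    CliffordAlgebra.ι_mul_ι_mem_evenOdd_zero _ _ _⟩

end SpinGroup

section UnitQuaternion

theorem mem_unitary_iff_normSq_eq_one {R : Type*} [CommRing R] {q : ℍ[R]} :
    q ∈ unitary ℍ[R] ↔ Quaternion.normSq q = 1 := by
  rw [Unitary.mem_iff, Quaternion.self_mul_star, Quaternion.star_mul_self, and_self,
    ← Quaternion.coe_one, Quaternion.coe_inj]

theorem inv_sqrt_normSq_smul_mem_unitary {q : ℍ[ℝ]} (hq : q ≠ 0) :
    (√(Quaternion.normSq q))⁻¹ • q ∈ unitary ℍ[ℝ] := by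
  rw [mem_unitary_iff_normSq_eq_one, Quaternion.normSq_smul, inv_pow,
    Real.sq_sqrt Quaternion.normSq_nonneg, inv_mul_cancel₀ (Quaternion.normSq_ne_zero.2 hq)]

theorem exists_mem_unitary_star_eq_neg_star_mul_eq_neg (q : ℍ[ℝ]) :
    ∃ n ∈ unitary ℍ[ℝ], star n = -n ∧ star (q * n) = -(q * n) := by
  let reₗ : ℍ[ℝ] →ₗ[ℝ] ℝ := QuaternionAlgebra.reₗ (-1) 0 (-1)
  have hker : (reₗ.prod (reₗ ∘ₗ LinearMap.mulLeft ℝ q)).ker ≠ ⊥ :=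
    LinearMap.ker_ne_bot_of_finrank_lt (by simp [Quaternion.finrank_eq_four])
  obtain ⟨n, hn, hn₀⟩ := Submodule.exists_mem_ne_zero_of_ne_bot hker
  obtain ⟨hre, hqre⟩ : n.re = 0 ∧ (q * n).re = 0 := Prod.mk.inj (LinearMap.mem_ker.1 hn)
  refine ⟨_, inv_sqrt_normSq_smul_mem_unitary hn₀, ?_, ?_⟩
  · rw [Quaternion.star_smul, Quaternion.star_eq_neg.2 hre, smul_neg]
  · rw [mul_smul_comm, Quaternion.star_smul, Quaternion.star_eq_neg.2 hqre, smul_neg]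

theorem exists_mul_eq_of_mem_unitary {q : ℍ[ℝ]} (hq : q ∈ unitary ℍ[ℝ]) :
    ∃ m ∈ unitary ℍ[ℝ], ∃ n ∈ unitary ℍ[ℝ], star m = -m ∧ star n = -n ∧ m * n = q := by
  obtain ⟨n, hn, hskew, hqskew⟩ := exists_mem_unitary_star_eq_neg_star_mul_eq_neg q
  refine ⟨q * star n, mul_mem hq (Unitary.star_mem hn), n, hn, ?_, hskew, ?_⟩
  · rw [hskew, mul_neg, star_neg, hqskew]
  · rw [mul_assoc, Unitary.star_mul_self_of_mem hn, mul_one]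

theorem exists_mul_self_eq_of_star_eq_neg {n : ℍ[ℝ]} (hn : n ∈ unitary ℍ[ℝ])
    (hskew : star n = -n) : ∃ s ∈ unitary ℍ[ℝ], s * s = n := by
  have hnn : n * n = -1 := by
    rw [← neg_eq_iff_eq_neg, ← mul_neg, ← hskew, Unitary.mul_star_self_of_mem hn]
  have hsq : (1 + n) * (1 + n) = (2 : ℝ) • n := by
    rw [add_mul, mul_add n, hnn, two_smul]
    noncomm_ring
  have hnorm : Quaternion.normSq (1 + n) = 2 := by
    rw [Quaternion.normSq_add, mem_unitary_iff_normSq_eq_one.1 hn, one_mul, Quaternion.re_star,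
      Quaternion.star_eq_neg.1 hskew, map_one]
    norm_num
  have hne : 1 + n ≠ 0 := Quaternion.normSq_ne_zero.1 (hnorm ▸ two_ne_zero)
  refine ⟨_, inv_sqrt_normSq_smul_mem_unitary hne, ?_⟩
  rw [smul_mul_smul_comm, hsq, hnorm, ← mul_inv, Real.mul_self_sqrt zero_le_two, smul_smul,
    inv_mul_cancel₀ two_ne_zero, one_smul]

theorem exists_mul_self_mul_mul_self_eq {q : ℍ[ℝ]} (hq : q ∈ unitary ℍ[ℝ]) :
    ∃ s ∈ unitary ℍ[ℝ], ∃ t ∈ unitary ℍ[ℝ], s * s * (t * t) = q := by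
  obtain ⟨m, hm, n, hn, hmskew, hnskew, rfl⟩ := exists_mul_eq_of_mem_unitary hq
  obtain ⟨s, hs, rfl⟩ := exists_mul_self_eq_of_star_eq_neg hm hmskew
  obtain ⟨t, ht, rfl⟩ := exists_mul_self_eq_of_star_eq_neg hn hnskew
  exact ⟨s, hs, t, ht, rfl⟩

theorem unitary_prod_unitary_le {S : Submonoid (ℍ[ℝ] × ℍ[ℝ])}
    (hS : ∀ q ∈ unitary ℍ[ℝ], (q, star q) ∈ S) :
    (unitary ℍ[ℝ]).prod (unitary ℍ[ℝ]) ≤ S := by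
  have diag {q : ℍ[ℝ]} (hq : q ∈ unitary ℍ[ℝ]) : (q, q) ∈ S := by
    obtain ⟨m, hm, n, hn, hmskew, hnskew, rfl⟩ := exists_mul_eq_of_mem_unitary hq
    simpa [hmskew, hnskew] using mul_mem (hS m hm) (hS n hn)
  have sq_left {s : ℍ[ℝ]} (hs : s ∈ unitary ℍ[ℝ]) : (s * s, 1) ∈ S := by
    simpa [hs] using mul_mem (diag hs) (hS s hs)
  have sq_right {s : ℍ[ℝ]} (hs : s ∈ unitary ℍ[ℝ]) : (1, s * s) ∈ S := by
    simpa [hs] using mul_mem (diag hs) (hS _ (Unitary.star_mem hs))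
  rintro ⟨a, b⟩ ⟨ha, hb⟩
  obtain ⟨s, hs, t, ht, rfl⟩ := exists_mul_self_mul_mul_self_eq ha
  obtain ⟨u, hu, v, hv, rfl⟩ := exists_mul_self_mul_mul_self_eq hb
  simpa using mul_mem (mul_mem (sq_left hs) (sq_left ht)) (mul_mem (sq_right hu) (sq_right hv))

end UnitQuaternion

section BasisVectors

theorem Qneg4_apply (m : Fin 4 → ℝ) :
    Qneg4 m = -(m 0 * m 0 + m 1 * m 1 + m 2 * m 2 + m 3 * m 3) := by
  simp [Qneg4, QuadraticMap.weightedSumSquares_apply, Fin.sum_univ_four]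

theorem Qneg4_single (i : Fin 4) : Qneg4 (Pi.single i 1) = -1 := by
  simp [Qneg4, QuadraticMap.weightedSumSquares_apply, Pi.single_apply]

theorem e_mul_self (i : Fin 4) : e i * e i = -1 := by
  rw [e, CliffordAlgebra.ι_sq_scalar, Qneg4_single, map_neg, map_one]

theorem e_mul_self_mul (i : Fin 4) (x : CliffordAlgebra Qneg4) : e i * (e i * x) = -x := by
  rw [← mul_assoc, e_mul_self, neg_one_mul]

theorem isOrtho_single_single {i j : Fin 4} (h : i ≠ j) :
    Qneg4.IsOrtho (Pi.single i 1) (Pi.single j 1) := by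
  rw [QuadraticMap.isOrtho_def, Qneg4_apply, Qneg4_apply, Qneg4_apply]
  fin_cases i <;> fin_cases j <;> simp at h ⊢

-- Oriented by `i < j`, the next two rules let `simp` sort products of basis vectors.
theorem e_mul_e_of_lt {i j : Fin 4} (h : i < j) : e j * e i = -(e i * e j) :=
  CliffordAlgebra.ι_mul_ι_comm_of_isOrtho (isOrtho_single_single h.ne')

theorem e_mul_e_mul_of_lt {i j : Fin 4} (h : i < j) (x : CliffordAlgebra Qneg4) :
    e j * (e i * x) = -(e i * (e j * x)) := by
  rw [← mul_assoc, e_mul_e_of_lt h, neg_mul, mul_assoc]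

theorem star_e (i : Fin 4) : star (e i) = -e i := CliffordAlgebra.star_ι _

theorem I4_mul_self : I4 * I4 = 1 := by
  simp [I4, mul_assoc, e_mul_self, e_mul_e_mul_of_lt]

theorem star_I4 : star I4 = I4 := by
  simp [I4, star_e, mul_assoc, e_mul_e_of_lt, e_mul_e_mul_of_lt]

theorem I4_mul_e (i : Fin 4) : I4 * e i = -(e i * I4) := by
  fin_cases i <;>
    simp [I4, mul_assoc, e_mul_self, e_mul_self_mul, e_mul_e_of_lt, e_mul_e_mul_of_lt]

theorem commute_I4_e_mul_e (i j : Fin 4) : Commute I4 (e i * e j) := by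
  rw [commute_iff_eq, ← mul_assoc, I4_mul_e, neg_mul, mul_assoc, I4_mul_e, mul_neg, neg_neg,
    mul_assoc]

theorem I4_ne_algebraMap (r : ℝ) : I4 ≠ algebraMap ℝ _ r := by
  intro h
  have hcomm : Commute I4 (e 0) := h ▸ Algebra.commute_algebraMap_left r (e 0)
  have := IsAddTorsionFree.of_module_rat (M := CliffordAlgebra Qneg4)
  have hzero : I4 * e 0 = 0 := self_eq_neg.1 ((I4_mul_e 0).trans (congrArg _ hcomm.eq.symm))
  have hI4 : I4 = 0 := by
    rw [← neg_eq_zero, ← mul_neg_one, ← e_mul_self 0, ← mul_assoc, hzero, zero_mul]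
  exact one_ne_zero (I4_mul_self.symm.trans (by rw [hI4, zero_mul]))

end BasisVectors

section EvenSubalgebra

open CliffordAlgebra (ι)

/-- The bivectors `e₁e₂, e₂e₃, e₃e₁` satisfy the quaternion relations. -/
noncomputable def bivectorBasis :
    QuaternionAlgebra.Basis (CliffordAlgebra Qneg4) (-1 : ℝ) 0 (-1) where
  i := e 0 * e 1
  j := e 1 * e 2
  k := e 2 * e 0
  i_mul_i := by simp [mul_assoc, e_mul_self, e_mul_e_mul_of_lt]
  j_mul_j := by simp [mul_assoc, e_mul_self, e_mul_e_mul_of_lt]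
  i_mul_j := by simp [mul_assoc, e_mul_self_mul, e_mul_e_of_lt]
  j_mul_i := by simp [mul_assoc, e_mul_self_mul, e_mul_e_of_lt, e_mul_e_mul_of_lt]

/-- The quaternion subalgebra of `Cl(4)⁰`: `qmap` as an algebra homomorphism. -/
noncomputable def qmapHom : ℍ[ℝ] →ₐ[ℝ] CliffordAlgebra Qneg4 := bivectorBasis.liftHom

theorem qmapHom_apply (x : ℍ[ℝ]) : qmapHom x = qmap x := rfl

theorem star_qmapHom (x : ℍ[ℝ]) : star (qmapHom x) = qmapHom (star x) := by
  simp [qmapHom_apply, qmap, CliffordAlgebra.star_smul, CliffordAlgebra.star_algebraMap, star_e,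
    e_mul_e_of_lt]

theorem commute_I4_qmapHom (x : ℍ[ℝ]) : Commute I4 (qmapHom x) := by
  rw [qmapHom_apply, qmap]
  exact (((Algebra.commute_algebraMap_right _ _).add_right
    ((commute_I4_e_mul_e 0 1).smul_right _)).add_right
    ((commute_I4_e_mul_e 1 2).smul_right _)).add_right ((commute_I4_e_mul_e 2 0).smul_right _)

/-- The idempotent `ε = (1 + 𝕀) / 2`, which splits `Cl(4)⁰` into two copies of `ℍ`. -/
noncomputable def chiralIdempotent : CliffordAlgebra Qneg4 := (2⁻¹ : ℝ) • (1 + I4)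

theorem isIdempotentElem_chiralIdempotent : IsIdempotentElem chiralIdempotent :=
  isIdempotentElem_half_smul_one_add I4_mul_self

theorem star_chiralIdempotent : star chiralIdempotent = chiralIdempotent := by
  rw [chiralIdempotent, CliffordAlgebra.star_smul, star_add, star_one, star_I4]

theorem commute_chiralIdempotent_qmapHom (x : ℍ[ℝ]) : Commute chiralIdempotent (qmapHom x) :=
  ((Commute.one_left _).add_left (commute_I4_qmapHom x)).smul_left _

theorem chiralIdempotent_ne_algebraMap (r : ℝ) : chiralIdempotent ≠ algebraMap ℝ _ r := by
  intro h
  apply I4_ne_algebraMap (2 * r - 1)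
  rw [map_sub, map_mul, ← h, chiralIdempotent, ← Algebra.smul_def, smul_smul,
    mul_inv_cancel₀ two_ne_zero, one_smul, map_one, add_sub_cancel_left]

/-- The algebra homomorphism `(a, b) ↦ εa + (1 - ε)b` from `ℍ × ℍ` to `Cl(4)`, which inverts
`u + 𝕀v ↦ (u + v, u - v)`. -/
noncomputable def prodHom : ℍ[ℝ] × ℍ[ℝ] →ₐ[ℝ] CliffordAlgebra Qneg4 :=
  idempotentCoprod chiralIdempotent isIdempotentElem_chiralIdempotent qmapHom qmapHom
    commute_chiralIdempotent_qmapHom commute_chiralIdempotent_qmapHom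

theorem prodHom_injective : Function.Injective prodHom :=
  idempotentCoprod_injective _ (by simpa using chiralIdempotent_ne_algebraMap 0)
    (by simpa using chiralIdempotent_ne_algebraMap 1) _ _

theorem prodHom_add_sub (u v : ℍ[ℝ]) : prodHom (u + v, u - v) = qmap u + I4 * qmap v := by
  rw [prodHom, idempotentCoprod_apply, chiralIdempotent]
  simp only [map_add, map_sub, qmapHom_apply, sub_mul, mul_sub, mul_add, add_mul, one_mul,
    smul_mul_assoc]
  module

theorem star_prodHom (p : ℍ[ℝ] × ℍ[ℝ]) : star (prodHom p) = prodHom (star p) := by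
  have h (x : ℍ[ℝ]) : qmapHom (star x) * chiralIdempotent = chiralIdempotent * qmapHom (star x) :=
    (commute_chiralIdempotent_qmapHom _).symm.eq
  simp [prodHom, idempotentCoprod_apply, star_qmapHom, star_chiralIdempotent, sub_mul, h]

/-- The identification `ℍ ≅ ℝ⁴` with `j, k, i, 1 ↦ e₁, e₂, e₃, e₄`. -/
def quatVec (q : ℍ[ℝ]) : Fin 4 → ℝ := ![q.imJ, q.imK, q.imI, q.re]

theorem quatVec_surjective : Function.Surjective quatVec := fun m =>
  ⟨⟨m 3, m 2, m 0, m 1⟩, by ext i; fin_cases i <;> rfl⟩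

theorem Qneg4_quatVec (q : ℍ[ℝ]) : Qneg4 (quatVec q) = -Quaternion.normSq q := by
  simp only [Qneg4_apply, Quaternion.normSq_def', quatVec, Matrix.cons_val]
  ring

theorem ι_quatVec (q : ℍ[ℝ]) :
    ι Qneg4 (quatVec q) = q.imJ • e 0 + q.imK • e 1 + q.imI • e 2 + q.re • e 3 := by
  conv_lhs => rw [pi_eq_sum_univ' (quatVec q), map_sum]
  simp only [map_smul, Fin.sum_univ_four]
  congr

theorem ι_quatVec_mul_e_three (q : ℍ[ℝ]) :
    ι Qneg4 (quatVec q) * e 3 = -prodHom (q, star q) := by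
  have hq : prodHom (q, star q) = qmap q.re + I4 * qmap q.im := by
    rw [← prodHom_add_sub]
    congr 2 <;> ext <;> simp
  rw [hq, ι_quatVec]
  simp [qmap, I4, mul_add, add_mul, mul_assoc, Algebra.algebraMap_eq_smul_one, e_mul_self,
    e_mul_self_mul, e_mul_e_of_lt, e_mul_e_mul_of_lt]
  module

theorem e_three_mul_ι_quatVec (q : ℍ[ℝ]) :
    e 3 * ι Qneg4 (quatVec q) = -prodHom (star q, q) := by
  simpa [star_e, star_prodHom, Prod.star_def] using congrArg star (ι_quatVec_mul_e_three q)

theorem ι_quatVec_mul_ι_quatVec (q r : ℍ[ℝ]) :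
    ι Qneg4 (quatVec q) * ι Qneg4 (quatVec r) =
      -prodHom (q * star r, star q * r) := by
  calc
    _ = -(ι Qneg4 (quatVec q) * e 3 * (e 3 * ι Qneg4 (quatVec r))) := by
      rw [mul_assoc, e_mul_self_mul, mul_neg, neg_neg]
    _ = _ := by
      rw [ι_quatVec_mul_e_three, e_three_mul_ι_quatVec, neg_mul_neg, ← map_mul, Prod.mk_mul_mk]

theorem even_le_range_prodHom : CliffordAlgebra.even Qneg4 ≤ prodHom.range := by
  intro x hx
  change x ∈ CliffordAlgebra.evenOdd Qneg4 0 at hx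
  induction x, hx using CliffordAlgebra.even_induction with
  | algebraMap r => exact algebraMap_mem _ r
  | add x y _ _ ihx ihy => exact add_mem ihx ihy
  | ι_mul_ι_mul m n x _ ih =>
    obtain ⟨q, rfl⟩ := quatVec_surjective m
    obtain ⟨r, rfl⟩ := quatVec_surjective n
    rw [ι_quatVec_mul_ι_quatVec]
    exact mul_mem (neg_mem ⟨_, rfl⟩) ih

theorem existsUnique_eq_qmap_add_I4_mul_qmap {x : CliffordAlgebra Qneg4}
    (hx : x ∈ CliffordAlgebra.even Qneg4) :
    ∃! p : ℍ[ℝ] × ℍ[ℝ], x = qmap p.1 + I4 * qmap p.2 := by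
  simp only [← prodHom_add_sub]
  obtain ⟨⟨a, b⟩, rfl⟩ := even_le_range_prodHom hx
  refine ⟨((2⁻¹ : ℝ) • (a + b), (2⁻¹ : ℝ) • (a - b)), congrArg prodHom ?_, ?_⟩
  · ext1 <;> dsimp only <;> module
  · rintro ⟨u, v⟩ h
    obtain ⟨rfl, rfl⟩ := Prod.mk.inj (prodHom_injective h)
    ext1 <;> dsimp only <;> module

end EvenSubalgebra

section SpinFour

open CliffordAlgebra (ι)

theorem prodHom_self_star_mem_spinGroup {q : ℍ[ℝ]} (hq : q ∈ unitary ℍ[ℝ]) :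
    prodHom (q, star q) ∈ spinGroup Qneg4 := by
  have hvec : Qneg4 (quatVec (-q)) = -1 := by
    rw [Qneg4_quatVec, Quaternion.normSq_neg, mem_unitary_iff_normSq_eq_one.1 hq]
  have hprod : prodHom (q, star q) = ι Qneg4 (quatVec (-q)) * e 3 := by
    rw [ι_quatVec_mul_e_three, ← map_neg, Prod.neg_mk, star_neg, neg_neg, neg_neg]
  rw [hprod]
  exact ι_mul_ι_mem_spinGroup hvec (Qneg4_single 3)

theorem mem_unitary_of_prodHom_mem_spinGroup {p : ℍ[ℝ] × ℍ[ℝ]}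
    (hp : prodHom p ∈ spinGroup Qneg4) : p ∈ unitary (ℍ[ℝ] × ℍ[ℝ]) := by
  refine Unitary.mem_iff.2 ⟨prodHom_injective ?_, prodHom_injective ?_⟩
  · rw [map_mul, ← star_prodHom, spinGroup.star_mul_self_of_mem hp, map_one]
  · rw [map_mul, ← star_prodHom, spinGroup.mul_star_self_of_mem hp, map_one]

theorem spinGroup_eq_map_prodHom :
    spinGroup Qneg4 = ((unitary ℍ[ℝ]).prod (unitary ℍ[ℝ])).map
      (prodHom : ℍ[ℝ] × ℍ[ℝ] →* CliffordAlgebra Qneg4) := by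
  apply le_antisymm
  · intro x hx
    obtain ⟨p, rfl⟩ := even_le_range_prodHom (spinGroup.mem_even hx)
    obtain ⟨hl, hr⟩ := Unitary.mem_iff.1 (mem_unitary_of_prodHom_mem_spinGroup hx)
    exact ⟨p, ⟨⟨congrArg Prod.fst hl, congrArg Prod.fst hr⟩,
      ⟨congrArg Prod.snd hl, congrArg Prod.snd hr⟩⟩, rfl⟩
  · rw [Submonoid.map_le_iff_le_comap]
    exact unitary_prod_unitary_le fun q hq => prodHom_self_star_mem_spinGroup hq

/-- The isomorphism `Spin(4) ≅ Spin(3) × Spin(3)`, inverse to the restriction of `prodHom`. -/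
noncomputable def spinFourEquiv : spinGroup Qneg4 ≃* unitary ℍ[ℝ] × unitary ℍ[ℝ] :=
  (MulEquiv.submonoidCongr spinGroup_eq_map_prodHom).trans <|
    (Submonoid.equivMapOfInjective _ (prodHom : ℍ[ℝ] × ℍ[ℝ] →* CliffordAlgebra Qneg4)
      prodHom_injective).symm.trans (Submonoid.prodEquiv _ _)

theorem prodHom_spinFourEquiv (x : spinGroup Qneg4) :
    prodHom ((spinFourEquiv x).1, (spinFourEquiv x).2) = x := by
  obtain ⟨y, rfl⟩ := spinFourEquiv.symm.surjective x
  rw [MulEquiv.apply_symm_apply]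
  rfl

end SpinFour

/-- Every element of `Spin(4)` is uniquely of the form `u + 𝕀v` with `u, v` quaternions, and
`u + 𝕀v ↦ (u+v, u−v)` is a group isomorphism `Spin(4) ≅ Spin(3) × Spin(3)`, where `Spin(3)` is
identified with the group of unit quaternions. -/
theorem stmt7 :
    (∀ x ∈ spinGroup Qneg4, ∃! p : ℍ[ℝ] × ℍ[ℝ], x = qmap p.1 + I4 * qmap p.2) ∧
    ∃ f : spinGroup Qneg4 ≃* (unitary ℍ[ℝ] × unitary ℍ[ℝ]),
      ∀ (x : spinGroup Qneg4) (u v : ℍ[ℝ]),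
        (x : CliffordAlgebra Qneg4) = qmap u + I4 * qmap v →
          ((f x).1 : ℍ[ℝ]) = u + v ∧ ((f x).2 : ℍ[ℝ]) = u - v := by
  refine ⟨fun x hx => existsUnique_eq_qmap_add_I4_mul_qmap (spinGroup.mem_even hx),
    spinFourEquiv, fun x u v hx => ?_⟩
  rw [← prodHom_add_sub, ← prodHom_spinFourEquiv] at hx
  exact Prod.mk.inj (prodHom_injective hx)
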